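/- Let n : ℕ and let ⟨·,·⟩ denote the Minkowski bilinear form on ℝ^{n+1}. Suppose K, D, F, Γ : Fin (n+1) → ℝ satisfy ⟨K,K⟩ = −2, ⟨K,D⟩ = 2, ⟨D,D⟩ = 14, ⟨K,F⟩ = −2, ⟨D,F⟩ = 8, ⟨F,F⟩ = 0, ⟨K,Γ⟩ = 4, ⟨D,Γ⟩ = 8, ⟨F,Γ⟩ = 8 and ⟨Γ,Γ⟩ = 0. Then 4·K + Γ = 2·F. -/

import Mathlib

/-- The Minkowski (Lorentzian) bilinear form on `ℝ^{n+1}`: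
`⟨x, y⟩ = x 0 * y 0 - ∑_{i=1}^{n} x i * y i`. -/
def mink (n : ℕ) (x y : Fin (n + 1) → ℝ) : ℝ :=
  x 0 * y 0 - ∑ i ∈ Finset.Ioi (0 : Fin (n + 1)), x i * y i

theorem mink_index (n : ℕ) (D V : Fin (n + 1) → ℝ) (hD : 0 < mink n D D)
    (hDV : mink n D V = 0) (hV : mink n V V = 0) : V = 0 := by
  unfold mink at hD hDV hV
  have cs := Finset.sum_mul_sq_le_sq_mul_sq (Finset.Ioi (0 : Fin (n + 1))) D V
  have h1 : ∑ i ∈ Finset.Ioi (0 : Fin (n + 1)), D i ^ 2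
      = ∑ i ∈ Finset.Ioi (0 : Fin (n + 1)), D i * D i := by simp only [sq]
  have h2 : ∑ i ∈ Finset.Ioi (0 : Fin (n + 1)), V i ^ 2 = V 0 * V 0 := by
    simp only [sq]; linarith
  have h3 : ∑ i ∈ Finset.Ioi (0 : Fin (n + 1)), D i * V i = D 0 * V 0 := by linarith
  rw [h1, h2, h3] at cs
  have h0 : V 0 = 0 := by
    by_contra h
    have hp : 0 < V 0 * V 0 := mul_self_pos.mpr h
    have := mul_pos hD hp
    nlinarith
  rw [h0, mul_zero, Finset.sum_eq_zero_iff_of_nonneg (fun i _ => sq_nonneg _)] at h2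
  funext i
  by_cases hi : i = 0
  · rw [hi]; exact h0
  · exact pow_eq_zero_iff (two_ne_zero) |>.mp (h2 i (Finset.mem_Ioi.mpr (Fin.pos_iff_ne_zero.mpr hi)))

theorem mink_comm (n : ℕ) (x y : Fin (n + 1) → ℝ) : mink n x y = mink n y x := by
  simp only [mink, mul_comm]

theorem mink_comb (n : ℕ) (x K G F : Fin (n + 1) → ℝ) :
    mink n x (4 • K + G - 2 • F) = 4 * mink n x K + mink n x G - 2 * mink n x F := by
  have h : ∑ i ∈ Finset.Ioi (0 : Fin (n + 1)), x i * (4 • K + G - 2 • F) i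
      = 4 * ∑ i ∈ Finset.Ioi (0 : Fin (n + 1)), x i * K i
        + ∑ i ∈ Finset.Ioi (0 : Fin (n + 1)), x i * G i
        - 2 * ∑ i ∈ Finset.Ioi (0 : Fin (n + 1)), x i * F i := by
    rw [Finset.mul_sum, Finset.mul_sum, ← Finset.sum_add_distrib, ← Finset.sum_sub_distrib]
    refine Finset.sum_congr rfl fun i _ => ?_
    simp only [Pi.sub_apply, Pi.add_apply, Pi.smul_apply]
    simp only [nsmul_eq_mul]
    push_cast
    ring
  unfold mink
  rw [h]
  simp only [Pi.sub_apply, Pi.add_apply, Pi.smul_apply]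
  simp only [nsmul_eq_mul]
  push_cast
  ring

/-- Proposition 2.7 (case k = 9, genus-3 component with self-intersection 0):
`Γ₀ ≡ −4K_W + 2F`. -/
theorem case9_genus3_component (n : ℕ) (K D F Γ : Fin (n + 1) → ℝ)
    (hKK : mink n K K = -2) (hKD : mink n K D = 2) (hDD : mink n D D = 14)
    (hKF : mink n K F = -2) (hDF : mink n D F = 8) (hFF : mink n F F = 0)
    (hKΓ : mink n K Γ = 4) (hDΓ : mink n D Γ = 8) (hFΓ : mink n F Γ = 8)
    (hΓΓ : mink n Γ Γ = 0) :
    4 • K + Γ = 2 • F := by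
  rw [← sub_eq_zero]
  apply mink_index n D _ (by rw [hDD]; norm_num)
  · rw [mink_comb, mink_comm n D K, hKD, hDΓ, hDF]; norm_num
  · rw [mink_comb, mink_comm n _ K, mink_comm n _ Γ, mink_comm n _ F, mink_comb, mink_comb,
      mink_comb, mink_comm n Γ K, mink_comm n F K, mink_comm n Γ F, hKK, hKF, hFF, hKΓ, hFΓ, hΓΓ]
    norm_num
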